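/- Let r ∈ ℤ_{≥0}, λ > −1/2, and n ∈ ℕ. The operator δ_λ maps S_m(ℝ) into S_{m−1}(ℝ) ∩ S(ℝ) for every m ≥ 1 (where at u = 0 the expression δ_λ g is extended by continuity), and for every g ∈ S_n(ℝ) and every v ∈ ℝ one has F_r^λ(δ_λ^n g)(v) = (−1)^n v^{2n} F_r^λ(g)(v). -/

import Mathlib

open Real MeasureTheory Finset

/-- Normalized Bessel function j_lambda(v). -/
noncomputable def nbessel (l v : ℝ) : ℝ :=
  Real.Gamma (l + 1) *
    ∑' k : ℕ, (-1 : ℝ) ^ k / (Nat.factorial k * Real.Gamma (k + l + 1)) * (v / 2) ^ (2 * k)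

/-- Pochhammer symbol (z)_n = z(z+1)...(z+n-1), with (z)_0 = 1. -/
noncomputable def poch (z : ℝ) (n : ℕ) : ℝ := ∏ i ∈ Finset.range n, (z + i)

/-- The kernel e_{2r+1}(v, lambda). -/
noncomputable def e2r1 (r : ℕ) (l : ℝ) (v : ℝ) : ℂ :=
  (nbessel l v : ℂ) + Complex.I * (-1 : ℂ) ^ (r + 1) *
    ((v ^ (2 * r + 1) / (2 ^ (2 * r + 1) * poch (l + 1) (2 * r + 1)) : ℝ) : ℂ) *
    (nbessel (l + (2 * r + 1)) v : ℂ)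

/-- The non-deformed transform F_r^lambda applied to a function g : ℝ → ℂ. -/
noncomputable def Ftrans (r : ℕ) (l : ℝ) (g : ℝ → ℂ) (v : ℝ) : ℂ :=
  ((1 / (2 ^ (l + 1) * Real.Gamma (l + 1)) : ℝ) : ℂ) *
    ∫ u : ℝ, e2r1 r l (u * v) * g u * ((|u| ^ (2 * l + 1) : ℝ) : ℂ)

/-- The differential-difference operator delta_lambda (for u ≠ 0). -/
noncomputable def deltaOp (r : ℕ) (l : ℝ) (g : ℝ → ℂ) (u : ℝ) : ℂ :=
  iteratedDeriv 2 g u + (((2 * l + 1) / u : ℝ) : ℂ) * deriv g u -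
    ((l + 1 / 2 + 2 * r * (l + r + 1) : ℝ) : ℂ) * (g u - g (-u)) / (u : ℂ) ^ 2

/-- g belongs to S_n(ℝ): a Schwartz function whose odd derivatives of order
2s+1 for s < n vanish at the origin. -/
def InSn (n : ℕ) (g : SchwartzMap ℝ ℂ) : Prop :=
  ∀ s : ℕ, s < n → iteratedDeriv (2 * s + 1) (⇑g) 0 = 0

/-!
With respect to the weight `|u| ^ (2λ + 1)` the operator `δ_λ` is symmetric: its Bessel part
`f'' + ((2λ + 1) / u) f'` turns `f δg - δf g` into the derivative of `|u| ^ (2λ + 1)` times the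
Wronskian `W = f g' - f' g`, and the reflection terms at `u` and `-u` cancel. The only boundary
term is `|u| ^ (2λ + 1) (W(u) - W(-u)) = O(|u| ^ (2λ + 2))` at the origin. Since
`u ↦ e_{2r+1}(uv, λ)` is an eigenfunction of `δ_λ` for the eigenvalue `-v ^ 2`, one application
of `δ_λ` multiplies the transform by `-v ^ 2`, and one iterates. What makes this possible is that
`δ_λ g` extends to a Schwartz function: if `g'(0) = 0`, then `g'` is divisible by `u` and
`g(u) - g(-u)` by `u ^ 2` within the Schwartz space, and the Taylor coefficients of the quotients
are those of `g`, shifted.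
-/

open Filter Topology
open scoped SchwartzMap ContDiff

theorem hasDerivAt_deriv_iteratedDeriv_two {E : Type*} [NormedAddCommGroup E] [NormedSpace ℝ E]
    {f : ℝ → E} (hf : ContDiff ℝ 2 f) (x : ℝ) :
    HasDerivAt (deriv f) (iteratedDeriv 2 f x) x := by
  rw [iteratedDeriv_succ, iteratedDeriv_one]
  exact (hf.differentiable_deriv_two x).hasDerivAt

section DivisionByCoordinate

variable {E : Type*} [NormedAddCommGroup E] [NormedSpace ℝ E]

theorem iteratedDeriv_succ_id_smul {f : ℝ → E} {k : ℕ} (hf : ContDiff ℝ (k + 1) f) (x : ℝ) :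
    iteratedDeriv (k + 1) (fun u => u • f u) x =
      x • iteratedDeriv (k + 1) f x + (k + 1) • iteratedDeriv k f x := by
  induction k generalizing x with
  | zero =>
    have hfx : HasDerivAt f (deriv f x) x :=
      (hf.differentiable (by norm_num)).differentiableAt.hasDerivAt
    simpa [Pi.smul_def'] using ((hasDerivAt_id x).smul hfx).deriv
  | succ k ih =>
    have hderiv (j : ℕ) (hj : j < k + 2) :
        HasDerivAt (iteratedDeriv j f) (iteratedDeriv (j + 1) f x) x := by
      rw [iteratedDeriv_succ]
      exact (hf.differentiable_iteratedDeriv j (by exact_mod_cast hj) x).hasDerivAt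
    have hsum := ((hasDerivAt_id x).smul (hderiv (k + 1) (by omega))).add
      ((hderiv k (by omega)).const_smul (k + 1))
    rw [iteratedDeriv_succ, funext (ih (hf.of_le (by norm_cast; omega)))]
    refine hsum.deriv.trans ?_
    simp only [id_eq, one_smul]
    module

theorem hasDerivAt_integral_pow_smul_comp_mul {f : ℝ → E} (hf : ContDiff ℝ 1 f) (k : ℕ) (x : ℝ) :
    HasDerivAt (fun u : ℝ => ∫ t in (0 : ℝ)..1, t ^ k • f (t * u))
      (∫ t in (0 : ℝ)..1, t ^ (k + 1) • deriv f (t * x)) x := by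
  have hf_cont : Continuous f := hf.continuous
  have hf'_cont : Continuous (deriv f) := hf.continuous_deriv le_rfl
  obtain ⟨C, hC⟩ := (isCompact_closedBall (0 : ℝ) (|x| + 1)).exists_bound_of_continuousOn
    hf'_cont.continuousOn
  refine (intervalIntegral.hasDerivAt_integral_of_dominated_loc_of_deriv_le
    (F := fun u t : ℝ => t ^ k • f (t * u)) (F' := fun u t : ℝ => t ^ (k + 1) • deriv f (t * u))
    (bound := fun _ => C) (Metric.ball_mem_nhds x one_pos) ?_ ?_ ?_ ?_
    intervalIntegrable_const ?_).2
  · exact .of_forall fun u => Continuous.aestronglyMeasurable (by fun_prop)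
  · exact Continuous.intervalIntegrable (by fun_prop) _ _
  · exact Continuous.aestronglyMeasurable (by fun_prop)
  · refine .of_forall fun t ht u hu => ?_
    rw [Set.uIoc_of_le zero_le_one] at ht
    have hu_le : |u| ≤ |x| + 1 := by
      have := abs_sub_abs_le_abs_sub u x
      rw [Metric.mem_ball, Real.dist_eq] at hu
      linarith
    have htu : t * u ∈ Metric.closedBall (0 : ℝ) (|x| + 1) := by
      rw [mem_closedBall_zero_iff, Real.norm_eq_abs, abs_mul, abs_of_pos ht.1]
      exact (mul_le_of_le_one_left (abs_nonneg u) ht.2).trans hu_le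
    calc ‖t ^ (k + 1) • deriv f (t * u)‖ = t ^ (k + 1) * ‖deriv f (t * u)‖ := by
          rw [norm_smul, Real.norm_of_nonneg (pow_nonneg ht.1.le _)]
      _ ≤ ‖deriv f (t * u)‖ :=
          mul_le_of_le_one_left (norm_nonneg _) (pow_le_one₀ ht.1.le ht.2)
      _ ≤ C := hC _ htu
  · refine .of_forall fun t _ u _ => ?_
    have hchain : HasDerivAt (fun u => f (t * u)) (t • deriv f (t * u)) u := by
      simpa [Function.comp_def] using (hf.differentiable one_ne_zero (t * u)).hasDerivAt.scomp u
        ((hasDerivAt_id u).const_mul t)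
    convert! hchain.const_smul (t ^ k) using 1
    rw [smul_smul, pow_succ]

theorem contDiff_integral_pow_smul_comp_mul {f : ℝ → E} {n : ℕ} (hf : ContDiff ℝ n f) (k : ℕ) :
    ContDiff ℝ n fun u : ℝ => ∫ t in (0 : ℝ)..1, t ^ k • f (t * u) := by
  induction n generalizing f k with
  | zero =>
    have hf_cont : Continuous f := hf.continuous
    exact contDiff_zero.2
      (intervalIntegral.continuous_parametric_intervalIntegral_of_continuous' (by fun_prop) _ _)
  | succ n ih =>
    have hderiv := hasDerivAt_integral_pow_smul_comp_mul (hf.of_le (by norm_cast; omega)) k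
    push_cast at hf ⊢
    refine contDiff_succ_iff_deriv.2 ⟨fun x => (hderiv x).differentiableAt, by simp, ?_⟩
    rw [funext fun x => (hderiv x).deriv]
    exact ih (contDiff_succ_iff_deriv.1 hf).2.2 (k + 1)

theorem exists_contDiff_eq_id_smul [CompleteSpace E] {f : ℝ → E} (hf : ContDiff ℝ ∞ f)
    (hf0 : f 0 = 0) : ∃ q : ℝ → E, ContDiff ℝ ∞ q ∧ ∀ u, f u = u • q u := by
  have hf' : ContDiff ℝ ∞ (deriv f) := (contDiff_infty_iff_deriv.1 hf).2
  have hf'_cont : Continuous (deriv f) := hf'.continuous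
  refine ⟨fun u => ∫ t in (0 : ℝ)..1, t ^ 0 • deriv f (t * u),
    contDiff_infty.2 fun n => contDiff_integral_pow_smul_comp_mul (contDiff_infty.1 hf' n) 0,
    fun u => ?_⟩
  have hftc := intervalIntegral.integral_eq_sub_of_hasDerivAt (a := 0) (b := 1)
    (f := fun t : ℝ => f (t * u)) (f' := fun t : ℝ => u • deriv f (t * u))
    (fun t _ => by
      simpa [Function.comp_def] using (hf.differentiable (by simp) (t * u)).hasDerivAt.scomp t
        ((hasDerivAt_id t).mul_const u))
    (Continuous.intervalIntegrable (by fun_prop) _ _)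
  simpa [hf0] using hftc.symm

theorem exists_norm_pow_mul_norm_iteratedDeriv_le_of_id_smul_eq {q : ℝ → E} (hq : ContDiff ℝ ∞ q)
    {f : 𝓢(ℝ, E)} (hqf : ∀ u, f u = u • q u) (p k : ℕ) :
    ∃ C : ℝ, ∀ u : ℝ, 1 ≤ ‖u‖ → ‖u‖ ^ p * ‖iteratedDeriv k q u‖ ≤ C := by
  have norm_le_smul (u : ℝ) (hu : 1 ≤ ‖u‖) (y : E) : ‖y‖ ≤ ‖u • y‖ := by
    rw [norm_smul]
    exact le_mul_of_one_le_left (norm_nonneg y) hu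
  have hf_decay (j : ℕ) : ∃ C : ℝ, ∀ u, ‖u‖ ^ p * ‖iteratedDeriv j f u‖ ≤ C := by
    obtain ⟨C, -, hC⟩ := f.decay p j
    exact ⟨C, fun u => by simpa only [norm_iteratedFDeriv_eq_norm_iteratedDeriv] using hC u⟩
  induction k with
  | zero =>
    obtain ⟨C, hC⟩ := hf_decay 0
    refine ⟨C, fun u hu => le_trans ?_ (hC u)⟩
    simp only [iteratedDeriv_zero, hqf u]
    gcongr
    exact norm_le_smul u hu (q u)
  | succ k ih =>
    obtain ⟨A, hA⟩ := hf_decay (k + 1)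
    obtain ⟨B, hB⟩ := ih
    refine ⟨A + (k + 1) * B, fun u hu => ?_⟩
    have hleibniz : u • iteratedDeriv (k + 1) q u =
        iteratedDeriv (k + 1) f u - (k + 1) • iteratedDeriv k q u := by
      rw [show (f : ℝ → E) = fun u => u • q u from funext hqf,
        iteratedDeriv_succ_id_smul (contDiff_infty.1 hq (k + 1)), add_sub_cancel_right]
    calc ‖u‖ ^ p * ‖iteratedDeriv (k + 1) q u‖
        ≤ ‖u‖ ^ p * ‖iteratedDeriv (k + 1) f u - (k + 1) • iteratedDeriv k q u‖ := by
          rw [← hleibniz]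
          gcongr
          exact norm_le_smul u hu _
      _ ≤ ‖u‖ ^ p * (‖iteratedDeriv (k + 1) f u‖ + (k + 1) * ‖iteratedDeriv k q u‖) := by
          gcongr
          refine (norm_sub_le _ _).trans ?_
          gcongr
          simpa using norm_nsmul_le (n := k + 1) (a := iteratedDeriv k q u)
      _ = ‖u‖ ^ p * ‖iteratedDeriv (k + 1) f u‖ +
            (k + 1) * (‖u‖ ^ p * ‖iteratedDeriv k q u‖) := by ring
      _ ≤ A + (k + 1) * B := by
          gcongr
          exacts [hA u, hB u hu]

theorem exists_schwartzMap_eq_id_smul [CompleteSpace E] (f : 𝓢(ℝ, E)) (hf0 : f 0 = 0) :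
    ∃ q : 𝓢(ℝ, E), ∀ u, f u = u • q u := by
  obtain ⟨q, hq, hqf⟩ := exists_contDiff_eq_id_smul (f.smooth ⊤) hf0
  refine ⟨⟨q, hq, fun p k => ?_⟩, hqf⟩
  obtain ⟨A, hA⟩ := exists_norm_pow_mul_norm_iteratedDeriv_le_of_id_smul_eq hq hqf p k
  have hcont : Continuous fun u : ℝ => ‖u‖ ^ p * ‖iteratedDeriv k q u‖ := by
    have := hq.continuous_iteratedDeriv k (by exact_mod_cast le_top)
    fun_prop
  obtain ⟨B, hB⟩ := (isCompact_closedBall (0 : ℝ) 1).exists_bound_of_continuousOn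
    hcont.continuousOn
  refine ⟨max A B, fun u => ?_⟩
  rw [norm_iteratedFDeriv_eq_norm_iteratedDeriv]
  rcases le_total 1 ‖u‖ with hu | hu
  · exact (hA u hu).trans (le_max_left A B)
  · exact (le_abs_self _).trans ((hB u (by simpa using hu)).trans (le_max_right A B))

end DivisionByCoordinate

section Preservation

theorem iteratedDeriv_zero_eq_zero_of_id_smul {E : Type*} [NormedAddCommGroup E] [NormedSpace ℝ E]
    {q : ℝ → E} {k : ℕ} (hq : ContDiff ℝ (k + 1) q)
    (h : iteratedDeriv (k + 1) (fun u => u • q u) 0 = 0) : iteratedDeriv k q 0 = 0 := by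
  rw [iteratedDeriv_succ_id_smul hq, zero_smul, zero_add, ← Nat.cast_smul_eq_nsmul ℝ] at h
  exact (smul_eq_zero.1 h).resolve_left (Nat.cast_ne_zero.2 k.succ_ne_zero)

theorem iteratedDeriv_derivCLM (g : 𝓢(ℝ, ℂ)) (k : ℕ) :
    iteratedDeriv k (SchwartzMap.derivCLM ℂ ℂ g) = iteratedDeriv (k + 1) g :=
  iteratedDeriv_succ'.symm

variable {m : ℕ} {f g : 𝓢(ℝ, ℂ)}

theorem InSn.add (hf : InSn m f) (hg : InSn m g) : InSn m (f + g) := fun s hs => by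
  rw [FunLike.coe_add, iteratedDeriv_add (f.smooth _).contDiffAt (g.smooth _).contDiffAt,
    hf s hs, hg s hs, add_zero]

theorem InSn.const_smul (hg : InSn m g) (c : ℂ) : InSn m (c • g) := fun s hs => by
  rw [FunLike.coe_smul, iteratedDeriv_const_smul_field, hg s hs, smul_zero]

theorem InSn.derivCLM_derivCLM (hg : InSn (m + 1) g) :
    InSn m (SchwartzMap.derivCLM ℂ ℂ (SchwartzMap.derivCLM ℂ ℂ g)) := fun s hs => by
  rw [iteratedDeriv_derivCLM, iteratedDeriv_derivCLM]
  exact hg (s + 1) (by omega)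

theorem InSn.exists_deriv_eq_mul (hg : InSn (m + 1) g) :
    ∃ q : 𝓢(ℝ, ℂ), InSn m q ∧ ∀ u : ℝ, deriv g u = u * q u := by
  have hg_deriv : deriv g 0 = 0 := by simpa using hg 0 m.succ_pos
  obtain ⟨q, hq⟩ := exists_schwartzMap_eq_id_smul (SchwartzMap.derivCLM ℂ ℂ g) hg_deriv
  refine ⟨q, fun s hs => iteratedDeriv_zero_eq_zero_of_id_smul (q.smooth _) ?_, hq⟩
  rw [← funext hq, iteratedDeriv_derivCLM]
  exact hg (s + 1) (by omega)

theorem InSn.exists_sub_comp_neg_eq_sq_mul (hg : InSn (m + 1) g) :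
    ∃ q : 𝓢(ℝ, ℂ), InSn m q ∧ ∀ u : ℝ, g u - g (-u) = (u : ℂ) ^ 2 * q u := by
  set d : 𝓢(ℝ, ℂ) := g - SchwartzMap.compCLMOfContinuousLinearEquiv ℂ
    (ContinuousLinearEquiv.neg ℝ) g
  have hd_apply (u : ℝ) : d u = g u - g (-u) := rfl
  have hd_odd (s : ℕ) (hs : s < m + 1) : iteratedDeriv (2 * s + 1) d 0 = 0 := by
    have hg_smooth : ContDiff ℝ ((2 * s + 1 : ℕ) : ℕ∞) g := g.smooth _
    have hg_neg_smooth : ContDiff ℝ ((2 * s + 1 : ℕ) : ℕ∞) fun u => g (-u) :=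
      hg_smooth.comp contDiff_neg
    rw [funext hd_apply, iteratedDeriv_fun_sub hg_smooth.contDiffAt hg_neg_smooth.contDiffAt,
      iteratedDeriv_comp_neg, neg_zero, hg s hs, smul_zero, sub_zero]
  obtain ⟨q₁, hq₁⟩ := exists_schwartzMap_eq_id_smul d (by simp [hd_apply])
  rw [funext hq₁] at hd_odd
  have hq₁_even (s : ℕ) (hs : s < m + 1) : iteratedDeriv (2 * s) q₁ 0 = 0 :=
    iteratedDeriv_zero_eq_zero_of_id_smul (q₁.smooth _) (hd_odd s hs)
  obtain ⟨q₂, hq₂⟩ := exists_schwartzMap_eq_id_smul q₁ (by simpa using hq₁_even 0 m.succ_pos)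
  rw [funext hq₂] at hq₁_even
  refine ⟨q₂, fun s hs => iteratedDeriv_zero_eq_zero_of_id_smul (q₂.smooth _)
    (hq₁_even (s + 1) (by omega)), fun u => ?_⟩
  rw [← hd_apply, hq₁, hq₂]
  simp only [Complex.real_smul]
  ring

theorem InSn.exists_schwartzMap_eq_deltaOp (hg : InSn (m + 1) g) (r : ℕ) (l : ℝ) :
    ∃ h : 𝓢(ℝ, ℂ), InSn m h ∧ ∀ u : ℝ, u ≠ 0 → h u = deltaOp r l g u := by
  obtain ⟨q₁, hq₁_mem, hq₁⟩ := hg.exists_deriv_eq_mul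
  obtain ⟨q₂, hq₂_mem, hq₂⟩ := hg.exists_sub_comp_neg_eq_sq_mul
  refine ⟨SchwartzMap.derivCLM ℂ ℂ (SchwartzMap.derivCLM ℂ ℂ g) + ((2 * l + 1 : ℝ) : ℂ) • q₁ +
      (-((l + 1 / 2 + 2 * r * (l + r + 1) : ℝ) : ℂ)) • q₂,
    (hg.derivCLM_derivCLM.add (hq₁_mem.const_smul _)).add (hq₂_mem.const_smul _), fun u hu => ?_⟩
  have hu' : (u : ℂ) ≠ 0 := Complex.ofReal_ne_zero.2 hu
  have hderiv2 : SchwartzMap.derivCLM ℂ ℂ (SchwartzMap.derivCLM ℂ ℂ g) u =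
      iteratedDeriv 2 g u := by
    rw [iteratedDeriv_succ, iteratedDeriv_one]
    rfl
  rw [add_apply, add_apply, smul_apply, smul_apply, hderiv2, deltaOp, hq₁, hq₂, Complex.ofReal_div]
  simp only [smul_eq_mul]
  field_simp
  ring

end Preservation

section ExponentialGeneratingSeries

/-- The exponential generating series of the coefficients `b`, summed at `x`. -/
noncomputable def expGenSeries (b : ℕ → ℝ) (x : ℝ) : ℝ :=
  ∑' k : ℕ, b k * (x ^ k / k.factorial)

variable {b : ℕ → ℝ} {C M : ℝ}

theorem norm_mul_pow_div_factorial_le (hb : ∀ k, |b k| ≤ C * M ^ k) {x R : ℝ} (hx : |x| ≤ R)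
    (k : ℕ) : ‖b k * (x ^ k / k.factorial)‖ ≤ C * ((M * R) ^ k / k.factorial) := by
  rw [norm_mul, norm_div, norm_pow, Real.norm_eq_abs, Real.norm_eq_abs, RCLike.norm_natCast]
  calc |b k| * (|x| ^ k / k.factorial) ≤ C * M ^ k * (R ^ k / k.factorial) := by
        gcongr
        exacts [(abs_nonneg _).trans (hb k), hb k]
    _ = C * ((M * R) ^ k / k.factorial) := by rw [mul_pow]; ring

theorem summable_mul_pow_div_factorial (hb : ∀ k, |b k| ≤ C * M ^ k) (x : ℝ) :
    Summable fun k : ℕ => b k * (x ^ k / k.factorial) :=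
  .of_norm_bounded ((Real.summable_pow_div_factorial (M * |x|)).mul_left C)
    (norm_mul_pow_div_factorial_le hb le_rfl)

theorem abs_succ_le_mul_pow (hb : ∀ k, |b k| ≤ C * M ^ k) (k : ℕ) :
    |b (k + 1)| ≤ C * M * M ^ k :=
  (hb (k + 1)).trans_eq (by ring)

theorem hasDerivAt_expGenSeries (hb : ∀ k, |b k| ≤ C * M ^ k) (x : ℝ) :
    HasDerivAt (expGenSeries b) (expGenSeries (fun k => b (k + 1)) x) x := by
  have hterm (k : ℕ) (y : ℝ) :
      HasDerivAt (fun z : ℝ => b (k + 1) * (z ^ (k + 1) / (k + 1).factorial))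
        (b (k + 1) * (y ^ k / k.factorial)) y := by
    convert! ((hasDerivAt_pow (k + 1) y).div_const ((k + 1).factorial : ℝ)).const_mul (b (k + 1))
      using 1
    rw [Nat.factorial_succ, Nat.cast_mul, add_tsub_cancel_right]
    field_simp
  have htail := hasDerivAt_tsum_of_isPreconnected
    ((Real.summable_pow_div_factorial (M * (|x| + 1))).mul_left (C * M)) Metric.isOpen_ball
    (convex_ball (0 : ℝ) (|x| + 1)).isPreconnected (fun k y _ => hterm k y)
    (fun k y hy => norm_mul_pow_div_factorial_le (abs_succ_le_mul_pow hb)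
      (by simpa using (Metric.mem_ball.1 hy).le) k)
    (Metric.mem_ball_self (by positivity))
    ((summable_nat_add_iff 1).2 (summable_mul_pow_div_factorial hb 0)) (y := x) (by simp)
  refine (htail.const_add (b 0)).congr_of_eventuallyEq (.of_forall fun y => ?_)
  simpa [expGenSeries] using (summable_mul_pow_div_factorial hb y).tsum_eq_zero_add

theorem hasSum_natCast_mul_mul_pow_div_factorial (hb : ∀ k, |b k| ≤ C * M ^ k) (x : ℝ) :
    HasSum (fun k : ℕ => k * b k * (x ^ k / k.factorial))
      (x * expGenSeries (fun k => b (k + 1)) x) := by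
  rw [← hasSum_nat_add_iff' 1]
  convert! (summable_mul_pow_div_factorial (abs_succ_le_mul_pow hb) x).hasSum.mul_left x using 1
  · funext k
    rw [Nat.factorial_succ, Nat.cast_mul]
    field_simp
    ring
  · simp [expGenSeries]

end ExponentialGeneratingSeries

section Bessel

/-- The coefficients of `j_l (v)` as an exponential generating series in `v ^ 2 / 4`, with the
alternating sign included. -/
noncomputable def besselCoeff (l : ℝ) (k : ℕ) : ℝ :=
  (-1) ^ k * Real.Gamma (l + 1) / Real.Gamma (k + l + 1)

theorem nbessel_eq_expGenSeries (l v : ℝ) :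
    nbessel l v = expGenSeries (besselCoeff l) (v ^ 2 / 4) := by
  rw [nbessel, expGenSeries, ← tsum_mul_left]
  refine tsum_congr fun k => ?_
  rw [besselCoeff, pow_mul, show (v / 2) ^ 2 = v ^ 2 / 4 by ring]
  simp only [div_eq_mul_inv, mul_inv]
  ring

theorem nbessel_neg (l v : ℝ) : nbessel l (-v) = nbessel l v := by
  simp only [nbessel_eq_expGenSeries, neg_sq]

variable {l : ℝ}

theorem besselCoeff_zero (hl : -1 < l) : besselCoeff l 0 = 1 := by
  have hΓ : Real.Gamma (l + 1) ≠ 0 := (Real.Gamma_pos_of_pos (by linarith)).ne'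
  simp [besselCoeff, hΓ]

theorem besselCoeff_succ (hl : -1 < l) (k : ℕ) :
    besselCoeff l (k + 1) = -(1 / (l + 1)) * besselCoeff (l + 1) k := by
  have hl' : l + 1 ≠ 0 := by linarith
  rw [besselCoeff, besselCoeff, Real.Gamma_add_one hl', Nat.cast_succ,
    show (k : ℝ) + 1 + l + 1 = k + (l + 1) + 1 by ring]
  field_simp
  ring

theorem add_mul_besselCoeff_add_one (hl : -1 < l) (k : ℕ) :
    (k + l + 1) * besselCoeff (l + 1) k = (l + 1) * besselCoeff l k := by
  have hk : 0 < (k : ℝ) + l + 1 := by linarith [k.cast_nonneg (α := ℝ)]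
  have hl' : l + 1 ≠ 0 := by linarith
  rw [besselCoeff, besselCoeff, Real.Gamma_add_one hl', ← add_assoc, Real.Gamma_add_one hk.ne']
  field_simp

theorem abs_besselCoeff_le (hl : -1 < l) (k : ℕ) : |besselCoeff l k| ≤ 1 * (1 / (l + 1)) ^ k := by
  have hl' : 0 < l + 1 := by linarith
  rw [one_mul]
  induction k with
  | zero => simp [besselCoeff_zero hl]
  | succ k ih =>
    have hk : l + 1 ≤ k + l + 1 := by linarith [k.cast_nonneg (α := ℝ)]
    have hratio : besselCoeff l (k + 1) = -(1 / (k + l + 1)) * besselCoeff l k := by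
      have := hl'.trans_le hk
      rw [besselCoeff_succ hl]
      field_simp
      linear_combination -add_mul_besselCoeff_add_one hl k
    calc |besselCoeff l (k + 1)| = 1 / (k + l + 1) * |besselCoeff l k| := by
          rw [hratio, abs_mul, abs_neg, abs_of_pos (one_div_pos.2 (hl'.trans_le hk))]
      _ ≤ 1 / (l + 1) * (1 / (l + 1)) ^ k := by gcongr
      _ = (1 / (l + 1)) ^ (k + 1) := (pow_succ' _ _).symm

theorem nbessel_zero (hl : -1 < l) : nbessel l 0 = 1 := by
  rw [nbessel_eq_expGenSeries, expGenSeries, tsum_eq_single 0 fun k hk => by simp [hk]]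
  simp [besselCoeff_zero hl]

theorem expGenSeries_besselCoeff_succ (hl : -1 < l) (x : ℝ) :
    expGenSeries (fun k => besselCoeff l (k + 1)) x =
      -(1 / (l + 1)) * expGenSeries (besselCoeff (l + 1)) x := by
  rw [expGenSeries, expGenSeries, ← tsum_mul_left]
  exact tsum_congr fun k => by rw [besselCoeff_succ hl, mul_assoc]

theorem hasDerivAt_nbessel (hl : -1 < l) (v : ℝ) :
    HasDerivAt (nbessel l) (-(1 / (2 * (l + 1))) * (v * nbessel (l + 1) v)) v := by
  have hsq : HasDerivAt (fun v : ℝ => v ^ 2 / 4) (v / 2) v := by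
    convert! (hasDerivAt_pow 2 v).div_const 4 using 1
    ring
  have hcomp := (hasDerivAt_expGenSeries (abs_besselCoeff_le hl) (v ^ 2 / 4)).comp v hsq
  rw [expGenSeries_besselCoeff_succ hl, ← nbessel_eq_expGenSeries] at hcomp
  refine (hcomp.congr_deriv ?_).congr_of_eventuallyEq
    (.of_forall fun v => nbessel_eq_expGenSeries l v)
  field_simp

theorem deriv_nbessel (hl : -1 < l) :
    deriv (nbessel l) = fun v => -(1 / (2 * (l + 1))) * (v * nbessel (l + 1) v) :=
  funext fun v => (hasDerivAt_nbessel hl v).deriv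

theorem nbessel_eq_sub (hl : -1 < l) (v : ℝ) :
    nbessel l v = nbessel (l + 1) v -
      v ^ 2 / (4 * (l + 1) * (l + 2)) * nbessel (l + 2) v := by
  have hl1 : -1 < l + 1 := by linarith
  have hl1' : l + 1 ≠ 0 := by linarith
  have hl2' : l + 2 ≠ 0 := by linarith
  have hsum := ((summable_mul_pow_div_factorial (abs_besselCoeff_le hl1) (v ^ 2 / 4)).hasSum.add
    ((hasSum_natCast_mul_mul_pow_div_factorial (abs_besselCoeff_le hl1) (v ^ 2 / 4)).mul_left
      (1 / (l + 1))))
  have hcoeff (k : ℕ) : besselCoeff l k =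
      besselCoeff (l + 1) k + 1 / (l + 1) * (k * besselCoeff (l + 1) k) := by
    field_simp
    linear_combination -add_mul_besselCoeff_add_one hl k
  rw [expGenSeries_besselCoeff_succ hl1, add_assoc l 1 1, one_add_one_eq_two,
    ← nbessel_eq_expGenSeries] at hsum
  have hl_sum : nbessel l v = _ := (nbessel_eq_expGenSeries l v).trans
    ((hsum.congr_fun fun k => by rw [hcoeff]; ring).tsum_eq)
  rw [hl_sum, ← expGenSeries, ← nbessel_eq_expGenSeries]
  field_simp
  ring

theorem contDiff_nbessel (hl : -1 < l) : ContDiff ℝ ∞ (nbessel l) := by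
  refine contDiff_infty.2 fun n => ?_
  induction n generalizing l with
  | zero =>
    exact contDiff_zero.2
      (continuous_iff_continuousAt.2 fun v => (hasDerivAt_nbessel hl v).continuousAt)
  | succ n ih =>
    push_cast
    refine contDiff_succ_iff_deriv.2
      ⟨fun v => (hasDerivAt_nbessel hl v).differentiableAt, by simp, ?_⟩
    rw [deriv_nbessel hl]
    exact contDiff_const.mul (contDiff_id.mul (ih (by linarith)))

theorem nbessel_ode (hl : -1 < l) (v : ℝ) :
    v * iteratedDeriv 2 (nbessel l) v + (2 * l + 1) * deriv (nbessel l) v + v * nbessel l v =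
      0 := by
  have hl1' : l + 1 ≠ 0 := by linarith
  have hl2' : l + 2 ≠ 0 := by linarith
  have hderiv2 := ((hasDerivAt_id' v).fun_mul
    (hasDerivAt_nbessel (by linarith : -1 < l + 1) v)).const_mul (-(1 / (2 * (l + 1))))
  rw [add_assoc l 1 1, one_add_one_eq_two] at hderiv2
  rw [iteratedDeriv_succ, iteratedDeriv_one, deriv_nbessel hl, hderiv2.deriv,
    nbessel_eq_sub hl v]
  field_simp
  ring

-- For `v > 0` the energy `y ^ 2 + y' ^ 2` has derivative `-2 a y' ^ 2 / v`.
theorem antitoneOn_sq_add_deriv_sq {y : ℝ → ℝ} {a : ℝ} (hy : ContDiff ℝ 2 y) (ha : 0 ≤ a)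
    (hode : ∀ v, 0 < v → v * iteratedDeriv 2 y v + a * deriv y v + v * y v = 0) :
    AntitoneOn (fun v => y v ^ 2 + deriv y v ^ 2) (Set.Ici 0) := by
  have hy' (v : ℝ) : HasDerivAt y (deriv y v) v :=
    (hy.differentiable two_ne_zero v).hasDerivAt
  have henergy (v : ℝ) : HasDerivAt (fun v => y v ^ 2 + deriv y v ^ 2)
      (2 * y v * deriv y v + 2 * deriv y v * iteratedDeriv 2 y v) v := by
    simpa using ((hy' v).fun_pow 2).fun_add
      ((hasDerivAt_deriv_iteratedDeriv_two hy v).fun_pow 2)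
  refine antitoneOn_of_hasDerivWithinAt_nonpos (convex_Ici 0)
    (fun v _ => (henergy v).continuousAt.continuousWithinAt)
    (fun v _ => (henergy v).hasDerivWithinAt) fun v hv => ?_
  rw [interior_Ici, Set.mem_Ioi] at hv
  have hdiss : v * (2 * y v * deriv y v + 2 * deriv y v * iteratedDeriv 2 y v) =
      -(2 * a * deriv y v ^ 2) := by
    linear_combination 2 * deriv y v * hode v hv
  refine nonpos_of_mul_nonpos_right (hdiss.trans_le ?_) hv
  exact neg_nonpos.2 (by positivity)

theorem abs_nbessel_le_one (hl : -(1 / 2) ≤ l) (v : ℝ) : |nbessel l v| ≤ 1 := by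
  have hl' : -1 < l := by linarith
  have henergy := antitoneOn_sq_add_deriv_sq (contDiff_infty.1 (contDiff_nbessel hl') 2)
    (by linarith : 0 ≤ 2 * l + 1) (fun v _ => nbessel_ode hl' v)
  have hle := henergy Set.self_mem_Ici (Set.mem_Ici.2 (abs_nonneg v)) (abs_nonneg v)
  have heven : nbessel l |v| = nbessel l v := by
    rcases abs_choice v with h | h <;> rw [h]
    exact nbessel_neg l v
  simp only [nbessel_zero hl', (hasDerivAt_nbessel hl' 0).deriv, heven] at hle
  rw [← sq_le_one_iff_abs_le_one]
  nlinarith [sq_nonneg (deriv (nbessel l) |v|)]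

theorem iteratedDeriv_add_two_nbessel (hl : -1 < l) (n : ℕ) (v : ℝ) :
    iteratedDeriv (n + 2) (nbessel l) v = -(1 / (2 * (l + 1))) *
      (v * iteratedDeriv (n + 1) (nbessel (l + 1)) v +
        (n + 1) * iteratedDeriv n (nbessel (l + 1)) v) := by
  have hsmooth := contDiff_infty.1 (contDiff_nbessel (by linarith : -1 < l + 1)) (n + 1)
  have hleibniz := iteratedDeriv_succ_id_smul hsmooth v
  simp only [smul_eq_mul, nsmul_eq_mul, Nat.cast_succ] at hleibniz
  rw [iteratedDeriv_succ', deriv_nbessel hl, iteratedDeriv_const_mul_field, hleibniz]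

theorem exists_abs_iteratedDeriv_nbessel_le (hl : -(1 / 2) ≤ l) (n : ℕ) :
    ∃ C, 0 ≤ C ∧ ∀ v, |iteratedDeriv n (nbessel l) v| ≤ C * (1 + |v|) ^ n := by
  have hl' : -1 < l := by linarith
  induction n using Nat.twoStepInduction generalizing l with
  | zero => exact ⟨1, zero_le_one, fun v => by simpa using abs_nbessel_le_one hl v⟩
  | one =>
    refine ⟨|1 / (2 * (l + 1))|, abs_nonneg _, fun v => ?_⟩
    rw [iteratedDeriv_one, deriv_nbessel hl', abs_mul, abs_neg, pow_one, abs_mul]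
    gcongr
    calc |v| * |nbessel (l + 1) v| ≤ |v| * 1 := by
          gcongr
          exact abs_nbessel_le_one (by linarith) v
      _ ≤ 1 + |v| := by linarith
  | more n ih₀ ih₁ =>
    obtain ⟨A, hA0, hA⟩ := ih₀ (l := l + 1) (by linarith) (by linarith)
    obtain ⟨B, hB0, hB⟩ := ih₁ (l := l + 1) (by linarith) (by linarith)
    refine ⟨|1 / (2 * (l + 1))| * (B + (n + 1) * A), by positivity, fun v => ?_⟩
    have hv : 1 ≤ 1 + |v| := le_add_of_nonneg_right (abs_nonneg v)
    rw [iteratedDeriv_add_two_nbessel hl', abs_mul, abs_neg, mul_assoc]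
    gcongr
    calc |v * iteratedDeriv (n + 1) (nbessel (l + 1)) v +
            (n + 1) * iteratedDeriv n (nbessel (l + 1)) v|
        ≤ |v| * |iteratedDeriv (n + 1) (nbessel (l + 1)) v| +
            (n + 1) * |iteratedDeriv n (nbessel (l + 1)) v| := by
          refine (abs_add_le _ _).trans_eq ?_
          rw [abs_mul, abs_mul, abs_of_nonneg (by positivity : (0 : ℝ) ≤ n + 1)]
      _ ≤ (1 + |v|) * (B * (1 + |v|) ^ (n + 1)) + (n + 1) * (A * (1 + |v|) ^ (n + 2)) := by
          gcongr
          · linarith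
          · exact hB v
          · exact (hA v).trans (by gcongr; omega)
      _ = (B + (n + 1) * A) * (1 + |v|) ^ (n + 2) := by ring

theorem hasTemperateGrowth_nbessel_of_neg_half_le (hl : -(1 / 2) ≤ l) :
    (nbessel l).HasTemperateGrowth := by
  refine ⟨contDiff_nbessel (by linarith), fun n => ?_⟩
  obtain ⟨C, -, hC⟩ := exists_abs_iteratedDeriv_nbessel_le hl n
  exact ⟨n, C, fun v => by
    simpa only [norm_iteratedFDeriv_eq_norm_iteratedDeriv, Real.norm_eq_abs] using hC v⟩

theorem hasTemperateGrowth_nbessel (hl : -1 < l) : (nbessel l).HasTemperateGrowth := by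
  rw [funext (nbessel_eq_sub hl)]
  simp only [div_eq_mul_inv]
  exact (hasTemperateGrowth_nbessel_of_neg_half_le (by linarith)).sub
    (((Function.HasTemperateGrowth.id'.pow 2).mul (.const _)).mul
      (hasTemperateGrowth_nbessel_of_neg_half_le (by linarith)))

end Bessel

section BesselOperator

variable {E F : Type*} [NormedAddCommGroup E] [NormedSpace ℝ E]
  [NormedAddCommGroup F] [NormedSpace ℝ F]

/-- The Bessel operator `f'' + (a / u) f'`, the differential part of `deltaOp`; its value at
`u = 0` carries no meaning because of the division by `u`. -/
noncomputable def besselOp (a : ℝ) (f : ℝ → E) (u : ℝ) : E :=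
  iteratedDeriv 2 f u + (a / u) • deriv f u

theorem besselOp_clm_comp (L : E →L[ℝ] F) {f : ℝ → E} (hf : ContDiff ℝ 2 f) (a u : ℝ) :
    besselOp a (fun x => L (f x)) u = L (besselOp a f u) := by
  have hderiv : deriv (fun x => L (f x)) = fun x => L (deriv f x) := funext fun x =>
    (L.hasFDerivAt.comp_hasDerivAt x (hf.differentiable two_ne_zero x).hasDerivAt).deriv
  have hderiv2 : iteratedDeriv 2 (fun x => L (f x)) u = L (iteratedDeriv 2 f u) := by
    rw [iteratedDeriv_succ, iteratedDeriv_one, hderiv]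
    exact (L.hasFDerivAt.comp_hasDerivAt u (hasDerivAt_deriv_iteratedDeriv_two hf u)).deriv
  rw [besselOp, hderiv, hderiv2, besselOp, map_add, map_smul]

theorem hasDerivAt_pow_mul {f : ℝ → ℝ} {f' x : ℝ} (hf : HasDerivAt f f' x) (hx : x ≠ 0) (s : ℕ) :
    HasDerivAt (fun u => u ^ s * f u) (x ^ s * (s / x * f x + f')) x := by
  convert! (hasDerivAt_pow s x).mul hf using 1
  rcases s with _ | s
  · simp
  · rw [add_tsub_cancel_right]
    field_simp
    ring

theorem besselOp_pow_mul {f : ℝ → ℝ} (hf : ContDiff ℝ 2 f) {x : ℝ} (hx : x ≠ 0) (a : ℝ) (s : ℕ) :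
    besselOp a (fun u => u ^ s * f u) x =
      x ^ s * besselOp (a + 2 * s) f x + s * (s - 1 + a) / x ^ 2 * (x ^ s * f x) := by
  have hf' (u : ℝ) : HasDerivAt f (deriv f u) u := (hf.differentiable two_ne_zero u).hasDerivAt
  have hderiv (u : ℝ) (hu : u ≠ 0) :
      deriv (fun u => u ^ s * f u) u = u ^ s * (s / u * f u + deriv f u) :=
    (hasDerivAt_pow_mul (hf' u) hu s).deriv
  have hfactor : HasDerivAt (fun u => s / u * f u + deriv f u)
      (-s / x ^ 2 * f x + s / x * deriv f x + iteratedDeriv 2 f x) x := by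
    convert! (((hasDerivAt_inv hx).const_mul (s : ℝ)).mul (hf' x)).add
      (hasDerivAt_deriv_iteratedDeriv_two hf x) using 1
    ring
  have hderiv2 := ((hasDerivAt_pow_mul hfactor hx s).congr_of_eventuallyEq
    ((eventually_ne_nhds hx).mono hderiv)).deriv
  rw [besselOp, besselOp, iteratedDeriv_succ, iteratedDeriv_one, hderiv2, hderiv x hx]
  simp only [smul_eq_mul]
  field_simp
  ring

theorem besselOp_nbessel {l v : ℝ} (hl : -1 < l) (hv : v ≠ 0) :
    besselOp (2 * l + 1) (nbessel l) v = -nbessel l v := by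
  rw [besselOp, smul_eq_mul]
  field_simp
  linear_combination nbessel_ode hl v

theorem besselOp_pow_mul_nbessel {l v : ℝ} (s : ℕ) (hl : -1 < l + s) (hv : v ≠ 0) :
    besselOp (2 * l + 1) (fun u => u ^ s * nbessel (l + s) u) v =
      (s * (s + 2 * l) / v ^ 2 - 1) * (v ^ s * nbessel (l + s) v) := by
  rw [besselOp_pow_mul (contDiff_infty.1 (contDiff_nbessel hl) 2) hv,
    show 2 * l + 1 + 2 * s = 2 * (l + s) + 1 by ring, besselOp_nbessel hl hv]
  ring

end BesselOperator

section Kernel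

variable (r : ℕ) (l : ℝ)

theorem deltaOp_eq_besselOp_sub (g : ℝ → ℂ) (u : ℝ) :
    deltaOp r l g u = besselOp (2 * l + 1) g u -
      ((l + 1 / 2 + 2 * r * (l + r + 1) : ℝ) : ℂ) * (g u - g (-u)) / (u : ℂ) ^ 2 := by
  rw [deltaOp, besselOp, Complex.real_smul]

variable {r l}

theorem deltaOp_add {f g : ℝ → ℂ} (hf : ContDiff ℝ 2 f) (hg : ContDiff ℝ 2 g) (u : ℝ) :
    deltaOp r l (fun x => f x + g x) u = deltaOp r l f u + deltaOp r l g u := by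
  rw [deltaOp, iteratedDeriv_fun_add hf.contDiffAt hg.contDiffAt,
    deriv_fun_add (hf.differentiable two_ne_zero u) (hg.differentiable two_ne_zero u), deltaOp,
    deltaOp]
  ring

theorem deltaOp_const_mul (c : ℂ) (g : ℝ → ℂ) (u : ℝ) :
    deltaOp r l (fun x => c * g x) u = c * deltaOp r l g u := by
  rw [deltaOp, iteratedDeriv_const_mul_field, deriv_const_mul_field, deltaOp]
  ring

theorem deltaOp_comp_mul_const {f : ℝ → ℂ} (hf : ContDiff ℝ 2 f) (v u : ℝ) :
    deltaOp r l (fun x => f (x * v)) u = (v : ℂ) ^ 2 * deltaOp r l f (u * v) := by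
  have hderiv : deriv (fun x => f (v * x)) = fun x => v * deriv f (v * x) := by
    simpa using iteratedDeriv_comp_const_smul (n := 1) (hf.of_le one_le_two) v
  simp only [mul_comm _ v]
  rw [deltaOp, iteratedDeriv_comp_const_smul hf v, hderiv, deltaOp]
  simp only [Complex.real_smul]
  rcases eq_or_ne v 0 with rfl | hv
  · simp
  · have hv' : (v : ℂ) ≠ 0 := Complex.ofReal_ne_zero.2 hv
    push_cast
    rw [mul_neg]
    field_simp

theorem deltaOp_ofReal_nbessel (hl : -1 < l) {v : ℝ} (hv : v ≠ 0) :
    deltaOp r l (fun u => (nbessel l u : ℂ)) v = -(nbessel l v : ℂ) := by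
  rw [deltaOp_eq_besselOp_sub, nbessel_neg, sub_self, mul_zero, zero_div, sub_zero]
  exact (besselOp_clm_comp Complex.ofRealCLM (contDiff_infty.1 (contDiff_nbessel hl) 2) _ v).trans
    (by rw [besselOp_nbessel hl hv]; simp)

-- The reflection term cancels `s (s + 2 l) / v ^ 2` for `s = 2 r + 1`, since the constant of
-- `deltaOp` is `s (s + 2 l) / 2`.
theorem deltaOp_ofReal_pow_mul_nbessel (hl : -1 < l + (2 * r + 1 : ℕ)) {v : ℝ} (hv : v ≠ 0) :
    deltaOp r l (fun u => ((u ^ (2 * r + 1) * nbessel (l + (2 * r + 1 : ℕ)) u : ℝ) : ℂ)) v =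
      -((v ^ (2 * r + 1) * nbessel (l + (2 * r + 1 : ℕ)) v : ℝ) : ℂ) := by
  have hsmooth : ContDiff ℝ 2 fun u : ℝ => u ^ (2 * r + 1) * nbessel (l + (2 * r + 1 : ℕ)) u :=
    (contDiff_id.pow _).mul (contDiff_infty.1 (contDiff_nbessel hl) 2)
  have hbessel := (besselOp_clm_comp Complex.ofRealCLM hsmooth (2 * l + 1) v).trans
    (congrArg _ (besselOp_pow_mul_nbessel (2 * r + 1) hl hv))
  simp only [Complex.ofRealCLM_apply] at hbessel
  rw [deltaOp_eq_besselOp_sub, hbessel, nbessel_neg, (odd_two_mul_add_one r).neg_pow]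
  have hv' : (v : ℂ) ≠ 0 := Complex.ofReal_ne_zero.2 hv
  push_cast
  field_simp
  ring

variable (r l) in
theorem exists_e2r1_eq_add_const_mul : ∃ c : ℂ, e2r1 r l = fun v => (nbessel l v : ℂ) +
    c * ((v ^ (2 * r + 1) * nbessel (l + (2 * r + 1 : ℕ)) v : ℝ) : ℂ) := by
  refine ⟨Complex.I * (-1) ^ (r + 1) / (2 ^ (2 * r + 1) * poch (l + 1) (2 * r + 1) : ℝ),
    funext fun v => ?_⟩
  rw [e2r1]
  push_cast
  ring

theorem hasTemperateGrowth_e2r1 (hl : -1 < l) : (e2r1 r l).HasTemperateGrowth := by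
  obtain ⟨c, hc⟩ := exists_e2r1_eq_add_const_mul r l
  have hshift : -1 < l + (2 * r + 1 : ℕ) := by
    linarith [(2 * r + 1).cast_nonneg (α := ℝ)]
  have hodd : Function.HasTemperateGrowth fun v : ℝ =>
      v ^ (2 * r + 1) * nbessel (l + (2 * r + 1 : ℕ)) v :=
    (Function.HasTemperateGrowth.id'.pow _).mul (hasTemperateGrowth_nbessel hshift)
  rw [hc]
  have hofReal {f : ℝ → ℝ} (hf : f.HasTemperateGrowth) :
      Function.HasTemperateGrowth fun v => (f v : ℂ) :=
    Complex.ofRealCLM.hasTemperateGrowth.comp hf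
  exact (hofReal (hasTemperateGrowth_nbessel hl)).add
    ((Function.HasTemperateGrowth.const c).mul (hofReal hodd))

theorem deltaOp_e2r1 (hl : -1 < l) {v : ℝ} (hv : v ≠ 0) :
    deltaOp r l (e2r1 r l) v = -e2r1 r l v := by
  obtain ⟨c, hc⟩ := exists_e2r1_eq_add_const_mul r l
  have hshift : -1 < l + (2 * r + 1 : ℕ) := by
    linarith [(2 * r + 1).cast_nonneg (α := ℝ)]
  have hsmooth {k : ℝ} (hk : -1 < k) : ContDiff ℝ 2 (nbessel k) :=
    contDiff_infty.1 (contDiff_nbessel hk) 2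
  have hodd : ContDiff ℝ 2 fun v : ℝ => v ^ (2 * r + 1) * nbessel (l + (2 * r + 1 : ℕ)) v :=
    (contDiff_id.pow _).mul (hsmooth hshift)
  have hofReal {f : ℝ → ℝ} (hf : ContDiff ℝ 2 f) : ContDiff ℝ 2 fun v => (f v : ℂ) :=
    Complex.ofRealCLM.contDiff.comp hf
  rw [hc, deltaOp_add (hofReal (hsmooth hl)) (contDiff_const.mul (hofReal hodd)),
    deltaOp_const_mul, deltaOp_ofReal_nbessel hl hv, deltaOp_ofReal_pow_mul_nbessel hshift hv]
  ring

theorem deltaOp_e2r1_mul_const (hl : -1 < l) {u : ℝ} (hu : u ≠ 0) (v : ℝ) :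
    deltaOp r l (fun x => e2r1 r l (x * v)) u = -(v : ℂ) ^ 2 * e2r1 r l (u * v) := by
  rw [deltaOp_comp_mul_const (contDiff_infty.1 (hasTemperateGrowth_e2r1 hl).1 2)]
  rcases eq_or_ne v 0 with rfl | hv
  · simp
  · rw [deltaOp_e2r1 hl (mul_ne_zero hu hv)]
    ring

end Kernel

section NormRpowWeight

variable {D E : Type*} [NormedAddCommGroup D] [NormedSpace ℝ D] [FiniteDimensional ℝ D]
  [NormedAddCommGroup E] [NormedSpace ℝ E]

theorem integrable_norm_rpow_smul_schwartzMap [Nontrivial D] [MeasurableSpace D] [BorelSpace D]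
    (μ : Measure D) [μ.IsAddHaarMeasure] {p : ℝ} (hp : -(Module.finrank ℝ D : ℝ) < p)
    (f : 𝓢(D, E)) : Integrable (fun x => ‖x‖ ^ p • f x) μ := by
  have hmeas : AEStronglyMeasurable (fun x => ‖x‖ ^ p • f x) μ :=
    (measurable_norm.pow_const p).aestronglyMeasurable.smul f.continuous.aestronglyMeasurable
  have hnorm (x : D) : ‖‖x‖ ^ p • f x‖ = ‖x‖ ^ p * ‖f x‖ := by
    rw [norm_smul, Real.norm_of_nonneg (by positivity)]
  have hlocal : LocallyIntegrable (fun x => ‖x‖ ^ p • f x) μ := by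
    refine locallyIntegrable_of_norm_le_rpow (C := SchwartzMap.seminorm ℝ 0 0 f)
      Module.finrank_pos (neg_lt.1 hp) (.of_forall fun x => ?_) hmeas
    rw [hnorm, neg_neg, mul_comm]
    gcongr
    exact f.norm_le_seminorm ℝ x
  refine hlocal.integrable_of_isBigO_cocompact (.of_bound 1 ?_)
    ((f.integrable_pow_mul μ ⌈p⌉₊).integrableAtFilter _)
  filter_upwards [tendsto_norm_cocompact_atTop.eventually_ge_atTop (1 : ℝ)] with x hx
  rw [hnorm, one_mul, Real.norm_of_nonneg (by positivity), ← Real.rpow_natCast]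
  gcongr
  exact Nat.le_ceil p

theorem tendsto_norm_rpow_smul_schwartzMap (p : ℝ) (f : 𝓢(D, E)) :
    Tendsto (fun x => ‖x‖ ^ p • f x) (cocompact D) (𝓝 0) := by
  have hbigO := (Asymptotics.isBigO_refl (fun x : D => ‖x‖ ^ p) (cocompact D)).smul
    (f.isBigO_cocompact_rpow (-p - 1))
  refine hbigO.trans_tendsto (((tendsto_rpow_neg_atTop one_pos).comp
    tendsto_norm_cocompact_atTop).congr' ?_)
  filter_upwards [tendsto_norm_cocompact_atTop.eventually_gt_atTop (0 : ℝ)] with x hx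
  rw [smul_eq_mul, ← Real.rpow_add hx, Function.comp_apply]
  ring_nf

end NormRpowWeight

section Symmetry

theorem integral_eq_zero_of_hasDerivAt_add_comp_neg {E : Type*} [NormedAddCommGroup E]
    [NormedSpace ℝ E] [CompleteSpace E] {F V : ℝ → E} (hF : Integrable F)
    (hcont : ContinuousWithinAt V (Set.Ici 0) 0) (hzero : V 0 = 0)
    (hlim : Tendsto V atTop (𝓝 0)) (hderiv : ∀ u, 0 < u → HasDerivAt V (F u + F (-u)) u) :
    ∫ u, F u = 0 := by
  have hhalf := integral_Ioi_of_hasDerivAt_of_tendsto hcont hderiv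
    (hF.add hF.comp_neg).integrableOn hlim
  rw [hzero, sub_zero, integral_add hF.integrableOn hF.comp_neg.integrableOn,
    integral_comp_neg_Ioi, neg_zero, add_comm] at hhalf
  rwa [← intervalIntegral.integral_Iic_add_Ioi (b := 0) hF.integrableOn hF.integrableOn]

variable {f g : ℝ → ℂ} {p l u : ℝ}

theorem hasDerivAt_abs_rpow_of_ne_zero (p : ℝ) (hu : u ≠ 0) :
    HasDerivAt (fun x : ℝ => |x| ^ p) (|u| ^ p * (p / u)) u := by
  convert! (hasDerivAt_abs hu).rpow_const (p := p) (.inl (abs_ne_zero.2 hu)) using 1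
  rw [Real.rpow_sub_one (abs_ne_zero.2 hu)]
  rcases hu.lt_or_gt with hneg | hpos
  · rw [sign_neg hneg, abs_of_neg hneg]
    simp only [SignType.coe_neg, SignType.coe_one]
    field_simp
  · rw [sign_pos hpos, abs_of_pos hpos]
    simp only [SignType.coe_one]
    field_simp

theorem hasDerivAt_abs_rpow_smul_wronskian (hf : ContDiff ℝ 2 f) (hg : ContDiff ℝ 2 g)
    (hu : u ≠ 0) :
    HasDerivAt (fun x => |x| ^ p • (f x * deriv g x - deriv f x * g x))
      (|u| ^ p • (f u * besselOp p g u - besselOp p f u * g u)) u := by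
  have hf' : HasDerivAt f (deriv f u) u := (hf.differentiable two_ne_zero u).hasDerivAt
  have hg' : HasDerivAt g (deriv g u) u := (hg.differentiable two_ne_zero u).hasDerivAt
  convert! (hasDerivAt_abs_rpow_of_ne_zero p hu).smul
    ((hf'.mul (hasDerivAt_deriv_iteratedDeriv_two hg u)).sub
      ((hasDerivAt_deriv_iteratedDeriv_two hf u).mul hg')) using 1
  simp only [besselOp, Complex.real_smul, Pi.mul_apply, Pi.sub_apply, Complex.ofReal_mul]
  ring

theorem mul_deltaOp_sub_deltaOp_mul_add_neg (r : ℕ) (f g : ℝ → ℂ) (l u : ℝ) :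
    (f u * deltaOp r l g u - deltaOp r l f u * g u) +
        (f (-u) * deltaOp r l g (-u) - deltaOp r l f (-u) * g (-u)) =
      (f u * besselOp (2 * l + 1) g u - besselOp (2 * l + 1) f u * g u) +
        (f (-u) * besselOp (2 * l + 1) g (-u) - besselOp (2 * l + 1) f (-u) * g (-u)) := by
  simp only [deltaOp_eq_besselOp_sub, neg_neg, Complex.ofReal_neg, neg_sq]
  ring

theorem tendsto_abs_rpow_smul_sub_comp_neg {E : Type*} [NormedAddCommGroup E] [NormedSpace ℝ E]
    {w : ℝ → E} (hw : DifferentiableAt ℝ w 0) (hp : -1 < p) :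
    Tendsto (fun u => |u| ^ p • (w u - w (-u))) (𝓝 0) (𝓝 0) := by
  have hw_neg : DifferentiableAt ℝ (fun u => w (-u)) 0 :=
    differentiableAt_comp_neg.2 (by rwa [neg_zero])
  have hodd : (fun u => w u - w (-u)) =O[𝓝 0] fun u => u := by
    simpa using (hw.sub hw_neg).isBigO_sub
  have hp' : p + 1 ≠ 0 := by linarith
  have hbigO := (Asymptotics.isBigO_refl (fun u : ℝ => |u| ^ p) (𝓝 0)).smul hodd.norm_right
  refine hbigO.trans_tendsto ?_
  simp only [Real.norm_eq_abs, smul_eq_mul, ← Real.rpow_add_one' (abs_nonneg _) hp']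
  have hcont : Continuous fun u : ℝ => |u| ^ (p + 1) :=
    continuous_abs.rpow_const fun _ => .inr (by linarith)
  simpa [Real.zero_rpow hp'] using hcont.tendsto 0

theorem exists_schwartzMap_eq_wronskian {φ : ℝ → ℂ} (hφ : φ.HasTemperateGrowth) (g : 𝓢(ℝ, ℂ)) :
    ∃ W : 𝓢(ℝ, ℂ), ∀ u, W u = φ u * deriv g u - deriv φ u * g u := by
  -- `W = 2 φ g' - (φ g)'` is Schwartz without a growth bound on `φ'`.
  refine ⟨(2 : ℂ) • SchwartzMap.smulLeftCLM ℂ φ (SchwartzMap.derivCLM ℂ ℂ g) -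
    SchwartzMap.derivCLM ℂ ℂ (SchwartzMap.smulLeftCLM ℂ φ g), fun u => ?_⟩
  have hφ' : HasDerivAt φ (deriv φ u) u :=
    ((contDiff_infty.1 hφ.1 1).differentiable one_ne_zero u).hasDerivAt
  have hprod : deriv (fun x => φ x * g x) u = deriv φ u * g u + φ u * deriv g u :=
    (hφ'.mul (g.hasDerivAt u)).deriv
  simp only [sub_apply, smul_apply, SchwartzMap.derivCLM_apply, SchwartzMap.smulLeftCLM_apply hφ,
    smul_eq_mul, hprod]
  ring

theorem integral_mul_deltaOp_eq {r : ℕ} (hl : -1 < l) {φ ψ : ℝ → ℂ} (hφ : φ.HasTemperateGrowth)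
    (hψ : ψ.HasTemperateGrowth) (hφψ : ∀ u, u ≠ 0 → ψ u = deltaOp r l φ u) {g h : 𝓢(ℝ, ℂ)}
    (hgh : ∀ u, u ≠ 0 → h u = deltaOp r l g u) :
    ∫ u, |u| ^ (2 * l + 1) • (φ u * h u) = ∫ u, |u| ^ (2 * l + 1) • (ψ u * g u) := by
  have hp : -1 < 2 * l + 1 := by linarith
  have hint {χ : ℝ → ℂ} (hχ : χ.HasTemperateGrowth) (f : 𝓢(ℝ, ℂ)) :
      Integrable fun u => |u| ^ (2 * l + 1) • (χ u * f u) := by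
    simpa only [SchwartzMap.smulLeftCLM_apply_apply hχ] using!
      integrable_norm_rpow_smul_schwartzMap volume (by simpa) (SchwartzMap.smulLeftCLM ℂ χ f)
  obtain ⟨W, hW⟩ := exists_schwartzMap_eq_wronskian hφ g
  have hS {u : ℝ} (hu : u ≠ 0) : HasDerivAt (fun x => |x| ^ (2 * l + 1) • W x)
      (|u| ^ (2 * l + 1) •
        (φ u * besselOp (2 * l + 1) g u - besselOp (2 * l + 1) φ u * g u)) u := by
    simpa only [hW] using
      hasDerivAt_abs_rpow_smul_wronskian (contDiff_infty.1 hφ.1 2) (g.smooth 2) hu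
  have hlim : Tendsto (fun x => |x| ^ (2 * l + 1) • W x) (cocompact ℝ) (𝓝 0) :=
    tendsto_norm_rpow_smul_schwartzMap _ W
  have hV (u : ℝ) : |u| ^ (2 * l + 1) • (W u - W (-u)) =
      |u| ^ (2 * l + 1) • W u - |-u| ^ (2 * l + 1) • W (-u) := by rw [abs_neg, smul_sub]
  rw [← sub_eq_zero, ← integral_sub (hint hφ h) (hint hψ g)]
  refine integral_eq_zero_of_hasDerivAt_add_comp_neg
    (V := fun u => |u| ^ (2 * l + 1) • (W u - W (-u))) ((hint hφ h).sub (hint hψ g))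
    (ContinuousAt.continuousWithinAt ?_) (by simp) ?_ fun u hu => ?_
  · simpa [ContinuousAt] using tendsto_abs_rpow_smul_sub_comp_neg W.differentiableAt hp
  · simp only [hV]
    simpa using (hlim.mono_left atTop_le_cocompact).sub
      ((hlim.mono_left atBot_le_cocompact).comp tendsto_neg_atTop_atBot)
  · simp only [hV]
    have hu' : -u ≠ 0 := neg_ne_zero.2 hu.ne'
    convert! (hS hu.ne').sub ((hS hu').scomp u (hasDerivAt_neg u)) using 1
    rw [hgh u hu.ne', hgh (-u) hu', hφψ u hu.ne', hφψ (-u) hu', neg_one_smul, sub_neg_eq_add,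
      abs_neg, ← smul_sub, ← smul_sub, ← smul_add, ← smul_add,
      mul_deltaOp_sub_deltaOp_mul_add_neg]

theorem Ftrans_eq_mul_integral_smul (r : ℕ) (l : ℝ) (g : ℝ → ℂ) (v : ℝ) :
    Ftrans r l g v = ((1 / (2 ^ (l + 1) * Real.Gamma (l + 1)) : ℝ) : ℂ) *
      ∫ u, |u| ^ (2 * l + 1) • (e2r1 r l (u * v) * g u) := by
  simp only [Ftrans, Complex.real_smul, mul_comm (e2r1 r l (_ * v) * g _)]

theorem Ftrans_eq_neg_sq_mul {r : ℕ} (hl : -1 < l) {g h : 𝓢(ℝ, ℂ)}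
    (hgh : ∀ u, u ≠ 0 → h u = deltaOp r l g u) (v : ℝ) :
    Ftrans r l h v = -(v : ℂ) ^ 2 * Ftrans r l g v := by
  have hφ : Function.HasTemperateGrowth fun u : ℝ => e2r1 r l (u * v) :=
    (hasTemperateGrowth_e2r1 hl).comp (Function.HasTemperateGrowth.id'.mul (.const v))
  have hψ : Function.HasTemperateGrowth fun u : ℝ => -(v : ℂ) ^ 2 * e2r1 r l (u * v) :=
    (Function.HasTemperateGrowth.const _).mul hφ
  rw [Ftrans_eq_mul_integral_smul, Ftrans_eq_mul_integral_smul,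
    integral_mul_deltaOp_eq hl hφ hψ (fun u hu => (deltaOp_e2r1_mul_const hl hu v).symm) hgh]
  simp only [mul_assoc, ← mul_smul_comm, integral_const_mul]
  ring

end Symmetry

section Iterate

variable {r : ℕ} {l : ℝ}

theorem deltaOp_eqOn_compl_zero {f g : ℝ → ℂ} (hfg : Set.EqOn f g {0}ᶜ) :
    Set.EqOn (deltaOp r l f) (deltaOp r l g) {0}ᶜ := fun u hu => by
  have hlocal : f =ᶠ[𝓝 u] g := hfg.eventuallyEq_of_mem (isOpen_compl_singleton.mem_nhds hu)
  rw [deltaOp, deltaOp, hlocal.iteratedDeriv_eq, hlocal.deriv_eq, hfg hu,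
    hfg (neg_ne_zero.2 hu : -u ≠ 0)]

theorem iterate_deltaOp_eqOn_compl_zero {f g : ℝ → ℂ} (hfg : Set.EqOn f g {0}ᶜ) (n : ℕ) :
    Set.EqOn ((deltaOp r l)^[n] f) ((deltaOp r l)^[n] g) {0}ᶜ := by
  induction n generalizing f g with
  | zero => exact hfg
  | succ _ ih => exact ih (deltaOp_eqOn_compl_zero hfg)

theorem Ftrans_congr_of_eqOn_compl_zero {f g : ℝ → ℂ} (hfg : Set.EqOn f g {0}ᶜ) :
    Ftrans r l f = Ftrans r l g := by
  funext v
  rw [Ftrans, Ftrans]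
  congr 1
  refine integral_congr_ae ?_
  filter_upwards [compl_mem_ae_iff.2 (measure_singleton (0 : ℝ))] with u hu
  rw [hfg hu]

theorem Ftrans_iterate_deltaOp (hl : -1 < l) {n : ℕ} {g : 𝓢(ℝ, ℂ)} (hg : InSn n g) (v : ℝ) :
    Ftrans r l ((deltaOp r l)^[n] g) v = (-1) ^ n * (v : ℂ) ^ (2 * n) * Ftrans r l g v := by
  induction n generalizing g with
  | zero => simp
  | succ n ih =>
    obtain ⟨h, hSn, hdelta⟩ := hg.exists_schwartzMap_eq_deltaOp r l
    have heq : Set.EqOn (deltaOp r l g) h {0}ᶜ := fun u hu => (hdelta u hu).symm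
    rw [Function.iterate_succ_apply,
      Ftrans_congr_of_eqOn_compl_zero (iterate_deltaOp_eqOn_compl_zero heq n), ih hSn,
      Ftrans_eq_neg_sq_mul hl hdelta]
    ring

end Iterate

theorem stmt18_general (r : ℕ) (l : ℝ) (hl : -1 < l) (n : ℕ) :
    (∀ m : ℕ, 1 ≤ m → ∀ g : SchwartzMap ℝ ℂ, InSn m g →
      ∃ h : SchwartzMap ℝ ℂ,
        (∀ u : ℝ, u ≠ 0 → h u = deltaOp r l (⇑g) u) ∧ InSn (m - 1) h) ∧
    (∀ g : SchwartzMap ℝ ℂ, InSn n g → ∀ v : ℝ,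
      Ftrans r l ((fun F => deltaOp r l F)^[n] ⇑g) v =
        (-1 : ℂ) ^ n * ((v : ℂ) ^ (2 * n)) * Ftrans r l (⇑g) v) := by
  refine ⟨fun m hm g hg => ?_, fun g hg v => Ftrans_iterate_deltaOp hl hg v⟩
  obtain ⟨k, rfl⟩ := Nat.exists_eq_add_of_le' hm
  obtain ⟨h, hSk, hdelta⟩ := hg.exists_schwartzMap_eq_deltaOp r l
  exact ⟨h, hdelta, hSk⟩

/-- delta_lambda maps S_m(ℝ) into S_{m-1}(ℝ) ∩ S(ℝ) (extending by
continuity at the origin), and for g ∈ S_n(ℝ),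
F_r^lambda(delta_lambda^n g)(v) = (-1)^n v^{2n} F_r^lambda(g)(v). -/
theorem stmt18 (r : ℕ) (l : ℝ) (hl : -(1 / 2 : ℝ) < l) (n : ℕ) (hn : 1 ≤ n) :
    (∀ m : ℕ, 1 ≤ m → ∀ g : SchwartzMap ℝ ℂ, InSn m g →
      ∃ h : SchwartzMap ℝ ℂ,
        (∀ u : ℝ, u ≠ 0 → h u = deltaOp r l (⇑g) u) ∧ InSn (m - 1) h) ∧
    (∀ g : SchwartzMap ℝ ℂ, InSn n g → ∀ v : ℝ,
      Ftrans r l ((fun F => deltaOp r l F)^[n] ⇑g) v =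
        (-1 : ℂ) ^ n * ((v : ℂ) ^ (2 * n)) * Ftrans r l (⇑g) v) := by
  exact stmt18_general r l (by linarith) n
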